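/- Instance-dependent approximation bound (finite-horizon error accumulation): suppose all reward distributions of the MDP are supported on [R_min, R_max], and let η^π be the unique fixed point of T^π. Then for any λ ∈ [0,1]^{X×[m]} and any k ≥ 1, w̄_1((Π^λ T^π)^k η^π, η^π) ≤ (V_max − V_min)(1 − γ^k) / (2m(1−γ)), where V_max = R_max/(1−γ) and V_min = R_min/(1−γ). In particular, if the QDP fixed point satisfies η̂^π_λ = (Π^λ T^π)^k η^π (as holds when, after k time steps, all encountered transition and reward distributions along any trajectory are Dirac deltas), then w̄_1(η̂^π_λ, η^π) ≤ (V_max − V_min)(1 − γ^k) / (2m(1−γ)). -/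

import Mathlib

open MeasureTheory ProbabilityTheory Set
open scoped ENNReal

/-- Generalized inverse CDF (least τ-quantile). -/
noncomputable def invCDF (ν : Measure ℝ) (τ : ℝ) : ℝ := sInf {y | τ ≤ cdf ν y}

/-- Upper inverse CDF (greatest τ-quantile). -/
noncomputable def upInvCDF (ν : Measure ℝ) (τ : ℝ) : ℝ := sInf {y | τ < cdf ν y}

/-- Quantile level τ_i = (2i-1)/(2m), with `i : Fin m` zero-indexed. -/
noncomputable def qlevel (m : ℕ) (i : Fin m) : ℝ := (2 * (i : ℝ) + 1) / (2 * m)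

/-- The uniform m-atom distribution with the given particle locations. -/
noncomputable def paramDistOne {m : ℕ} (θ : Fin m → ℝ) : Measure ℝ :=
  (m : ℝ≥0∞)⁻¹ • ∑ i : Fin m, Measure.dirac (θ i)

/-- Return-distribution function associated with quantile parameters θ. -/
noncomputable def paramDist {X : Type*} {m : ℕ} (θ : X → Fin m → ℝ) : X → Measure ℝ :=
  fun x => paramDistOne (θ x)

/-- The distributional Bellman operator T^π. -/
noncomputable def bellman {X : Type*} [MeasurableSpace X]
    (P : X → Measure (ℝ × X)) (γ : ℝ) (η : X → Measure ℝ) : X → Measure ℝ :=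
  fun x => (P x).bind (fun p => (η p.2).map (fun z => p.1 + γ * z))

/-- The quantile projection Π^λ, parameter-level output. -/
noncomputable def projParam {X : Type*} {m : ℕ} (lam : X → Fin m → ℝ)
    (η : X → Measure ℝ) : X → Fin m → ℝ :=
  fun x i => (1 - lam x i) * invCDF (η x) (qlevel m i) + lam x i * upInvCDF (η x) (qlevel m i)

/-- The quantile projection Π^λ on return-distribution functions. -/
noncomputable def proj {X : Type*} {m : ℕ} (lam : X → Fin m → ℝ)
    (η : X → Measure ℝ) : X → Measure ℝ :=
  paramDist (projParam lam η)

/-- The projected distributional Bellman operator Π^λ T^π acting on parameters. -/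
noncomputable def projBellmanParam {X : Type*} [MeasurableSpace X]
    (P : X → Measure (ℝ × X)) (γ : ℝ) {m : ℕ} (lam : X → Fin m → ℝ)
    (θ : X → Fin m → ℝ) : X → Fin m → ℝ :=
  projParam lam (bellman P γ (paramDist θ))

/-- The cube [0,1]^{X×[m]} of interpolation parameters. -/
def unitCube (X : Type*) (m : ℕ) : Set (X → Fin m → ℝ) :=
  {lam | ∀ x i, lam x i ∈ Set.Icc (0:ℝ) 1}

/-- Wasserstein-∞ distance (valued in [0,∞]). -/
noncomputable def winf (ν ν' : Measure ℝ) : ℝ≥0∞ :=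
  ⨆ t : Set.Ioo (0:ℝ) 1, ENNReal.ofReal |invCDF ν t - invCDF ν' t|

/-- Extension of w∞ to return-distribution functions: max over states. -/
noncomputable def wbar {X : Type*} (η η' : X → Measure ℝ) : ℝ≥0∞ :=
  ⨆ x : X, winf (η x) (η' x)

/-- Wasserstein-1 distance between probability distributions on ℝ. -/
noncomputable def w1 (ν ν' : Measure ℝ) : ℝ :=
  ∫ t in Set.Ioo (0:ℝ) 1, |invCDF ν t - invCDF ν' t|

/-- Uniform m-atom distributions. -/
noncomputable def FQ (m : ℕ) : Set (Measure ℝ) :=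
  {ν | ∃ z : Fin m → ℝ, ν = paramDistOne z}


/-!
`w₁` is the `L¹` distance between distribution functions. In that form the projection `Π^λ` costs
at most `(b - a) / (2m)` on distributions supported on `[a, b]`, because it moves the distribution
function by at most `1 / (2m)` at every point, and `T^π` contracts by the factor `γ`. Since `η^π`
is fixed by `T^π`, every application of `Π^λ T^π` multiplies the accumulated error by `γ` and adds
a new projection error, so after `k` steps the error is at most the geometric sum
`(b - a) / (2m) * ∑ i < k, γ ^ i`.

That `η^π` is supported on `[V_min, V_max]` follows from tightness: the excess of a return over this
interval shrinks by `γ` at every Bellman step, so each tail of `η^π` is at most an arbitrarily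
remote tail of `η^π` over all the states.
-/


section Quantiles

variable (ν : Measure ℝ) {t y : ℝ}

lemma bddBelow_setOf_le_cdf (ht : 0 < t) : BddBelow {y | t ≤ cdf ν y} := by
  obtain ⟨a, ha⟩ := ((tendsto_cdf_atBot ν).eventually (gt_mem_nhds ht)).exists
  exact ⟨a, fun z hz => ((monotone_cdf ν).reflect_lt (ha.trans_le hz)).le⟩

lemma nonempty_setOf_lt_cdf (ht : t < 1) : {y | t < cdf ν y}.Nonempty :=
  ((tendsto_cdf_atTop ν).eventually (lt_mem_nhds ht)).exists

lemma setOf_lt_cdf_subset_setOf_le_cdf : {y | t < cdf ν y} ⊆ {y | t ≤ cdf ν y} :=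
  fun _ (h : t < cdf ν _) => h.le

lemma invCDF_le_iff (ht : t ∈ Ioo (0 : ℝ) 1) : invCDF ν t ≤ y ↔ t ≤ cdf ν y := by
  refine ⟨fun h => ?_, fun h => csInf_le (bddBelow_setOf_le_cdf ν ht.1) h⟩
  refine ge_of_tendsto
    (((cdf ν).right_continuous y).tendsto.mono_left (nhdsWithin_mono y Ioi_subset_Ici_self)) ?_
  filter_upwards [self_mem_nhdsWithin] with z hz
  have hne := (nonempty_setOf_lt_cdf ν ht.2).mono (setOf_lt_cdf_subset_setOf_le_cdf ν)
  obtain ⟨w, hw, hwz⟩ := exists_lt_of_csInf_lt hne (h.trans_lt hz)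
  exact hw.trans (monotone_cdf ν hwz.le)

lemma bddBelow_setOf_lt_cdf (ht : 0 < t) : BddBelow {y | t < cdf ν y} :=
  (bddBelow_setOf_le_cdf ν ht).mono (setOf_lt_cdf_subset_setOf_le_cdf ν)

lemma upInvCDF_lt_iff (ht : t ∈ Ioo (0 : ℝ) 1) :
    upInvCDF ν t < y ↔ ∃ z < y, t < cdf ν z := by
  rw [upInvCDF, csInf_lt_iff (bddBelow_setOf_lt_cdf ν ht.1) (nonempty_setOf_lt_cdf ν ht.2)]
  exact exists_congr fun _ => and_comm

lemma upInvCDF_le_of_lt_cdf (ht : 0 < t) (h : t < cdf ν y) : upInvCDF ν t ≤ y :=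
  csInf_le (bddBelow_setOf_lt_cdf ν ht) h

lemma invCDF_le_upInvCDF (ht : t ∈ Ioo (0 : ℝ) 1) : invCDF ν t ≤ upInvCDF ν t :=
  csInf_le_csInf (bddBelow_setOf_le_cdf ν ht.1) (nonempty_setOf_lt_cdf ν ht.2)
    (setOf_lt_cdf_subset_setOf_le_cdf ν)

lemma monotoneOn_invCDF : MonotoneOn (invCDF ν) (Ioo 0 1) := fun _ hs _ ht hst =>
  (invCDF_le_iff ν hs).2 (hst.trans ((invCDF_le_iff ν ht).1 le_rfl))

variable {ν} [IsProbabilityMeasure ν]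

lemma cdf_eq_zero_of_ae_lt (h : ∀ᵐ z ∂ν, y < z) : cdf ν y = 0 := by
  have hnull : ν (Iic y) = 0 := by simpa [ae_iff, Iic_def] using h
  simp [cdf_eq_real, measureReal_def, hnull]

lemma cdf_eq_one_of_ae_le (h : ∀ᵐ z ∂ν, z ≤ y) : cdf ν y = 1 := by
  rw [cdf_eq_real, measureReal_def, (prob_compl_eq_zero_iff measurableSet_Iic).1 h,
    ENNReal.toReal_one]

lemma le_invCDF {a : ℝ} (ht : t ∈ Ioo (0 : ℝ) 1) (h : ∀ᵐ z ∂ν, a ≤ z) : a ≤ invCDF ν t := by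
  by_contra! hlt
  have hpos : t ≤ cdf ν (invCDF ν t) := (invCDF_le_iff ν ht).1 le_rfl
  rw [cdf_eq_zero_of_ae_lt (h.mono fun _ => hlt.trans_le)] at hpos
  exact hpos.not_gt ht.1

lemma upInvCDF_le {b : ℝ} (ht : t ∈ Ioo (0 : ℝ) 1) (h : ∀ᵐ z ∂ν, z ≤ b) : upInvCDF ν t ≤ b :=
  upInvCDF_le_of_lt_cdf ν ht.1 ((cdf_eq_one_of_ae_le h).symm ▸ ht.2)

end Quantiles

section QuantileProjection

variable {X : Type*} {m : ℕ} {lam : X → Fin m → ℝ}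

lemma qlevel_eq (i : Fin m) : qlevel m i = (i + 1 / 2) / m := by
  rw [qlevel, ← div_div]
  ring

lemma qlevel_mem_Ioo (i : Fin m) : qlevel m i ∈ Ioo (0 : ℝ) 1 := by
  have hi : (i : ℝ) + 1 ≤ m := by exact_mod_cast i.2
  have hm : (0 : ℝ) < m := by exact_mod_cast i.pos
  rw [qlevel_eq]
  exact ⟨by positivity, by rw [div_lt_one hm]; linarith⟩

lemma projParam_mem_Icc (hlam : lam ∈ unitCube X m) (η : X → Measure ℝ) (x : X) (i : Fin m) :
    projParam lam η x i ∈ Icc (invCDF (η x) (qlevel m i)) (upInvCDF (η x) (qlevel m i)) := by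
  have hle := invCDF_le_upInvCDF (η x) (qlevel_mem_Ioo i)
  exact convex_Icc _ _ (left_mem_Icc.2 hle) (right_mem_Icc.2 hle)
    (sub_nonneg.2 (hlam x i).2) (hlam x i).1 (sub_add_cancel _ _)

lemma isProbabilityMeasure_paramDistOne [NeZero m] (θ : Fin m → ℝ) :
    IsProbabilityMeasure (paramDistOne θ) := by
  constructor
  simp [paramDistOne, ENNReal.inv_mul_cancel, NeZero.ne m]

lemma ae_paramDistOne_of_forall {θ : Fin m → ℝ} {p : ℝ → Prop} (h : ∀ i, p (θ i)) :
    ∀ᵐ z ∂paramDistOne θ, p z :=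
  Measure.ae_smul_measure (ae_finsetSum_measure_iff.2 fun i _ => by simp [h i]) _

lemma cdf_paramDistOne [NeZero m] (θ : Fin m → ℝ) (y : ℝ) :
    cdf (paramDistOne θ) y = (Finset.univ.filter fun i => θ i ≤ y).card / (m : ℝ) := by
  have := isProbabilityMeasure_paramDistOne θ
  rw [cdf_eq_real, measureReal_def]
  simp only [paramDistOne, Measure.smul_apply,
    Measure.finsetSum_apply, smul_eq_mul, Measure.dirac_apply' _ measurableSet_Iic,
    indicator_apply, mem_Iic, Pi.one_apply, Finset.sum_boole, ENNReal.toReal_mul,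
    ENNReal.toReal_inv, ENNReal.toReal_natCast]
  ring

lemma abs_card_sub_le_half {s : Finset (Fin m)} {c : ℝ} (hc : c ∈ Icc (0 : ℝ) m)
    (hs : ∀ i ∈ s, (i : ℝ) + 1 / 2 ≤ c) (hs' : ∀ i ∉ s, c ≤ (i : ℝ) + 1 / 2) :
    |(s.card : ℝ) - c| ≤ 1 / 2 := by
  have hupper : (s.card : ℝ) ≤ c + 1 / 2 := by
    rcases s.eq_empty_or_nonempty with rfl | hne
    · simpa using hc.1.trans (by linarith)
    · have hsub : s ⊆ Finset.Iic (s.max' hne) := fun i hi => Finset.mem_Iic.2 (s.le_max' i hi)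
      have hcard := Finset.card_le_card hsub
      rw [Fin.card_Iic] at hcard
      have hcast : (s.card : ℝ) ≤ (s.max' hne : ℕ) + 1 := by exact_mod_cast hcard
      linarith [hs _ (s.max'_mem hne)]
  have hlower : c - 1 / 2 ≤ s.card := by
    rcases sᶜ.eq_empty_or_nonempty with he | hne
    · rw [(Finset.compl_eq_empty_iff s).1 he, Finset.card_univ, Fintype.card_fin]
      linarith [hc.2]
    · have hsub : Finset.Iio (sᶜ.min' hne) ⊆ s := fun i hi => by
        by_contra his
        exact (Finset.mem_Iio.1 hi).not_ge (sᶜ.min'_le i (Finset.mem_compl.2 his))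
      have hcard := Finset.card_le_card hsub
      rw [Fin.card_Iio] at hcard
      have hcast : ((sᶜ.min' hne : ℕ) : ℝ) ≤ s.card := by exact_mod_cast hcard
      linarith [hs' _ (Finset.mem_compl.1 (sᶜ.min'_mem hne))]
  exact abs_le.2 ⟨by linarith, by linarith⟩

lemma abs_cdf_proj_sub_cdf_le [NeZero m] (hlam : lam ∈ unitCube X m) (η : X → Measure ℝ)
    (x : X) (y : ℝ) : |cdf (proj lam η x) y - cdf (η x) y| ≤ 1 / (2 * m) := by
  have hm : (0 : ℝ) < m := by exact_mod_cast NeZero.pos m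
  have hcard : |((Finset.univ.filter fun i => projParam lam η x i ≤ y).card : ℝ)
      - cdf (η x) y * m| ≤ 1 / 2 := by
    refine abs_card_sub_le_half ⟨mul_nonneg (cdf_nonneg _ _) hm.le,
      mul_le_of_le_one_left hm.le (cdf_le_one _ _)⟩ (fun i hi => ?_) fun i hi => ?_
    · rw [← div_le_iff₀ hm, ← qlevel_eq, ← invCDF_le_iff _ (qlevel_mem_Ioo i)]
      exact (projParam_mem_Icc hlam η x i).1.trans (by simpa using hi)
    · rw [← le_div_iff₀ hm, ← qlevel_eq]
      refine not_lt.1 fun hlt => hi ?_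
      simpa using (projParam_mem_Icc hlam η x i).2.trans
        (upInvCDF_le_of_lt_cdf _ (qlevel_mem_Ioo i).1 hlt)
  rw [proj, paramDist, cdf_paramDistOne, div_sub' hm.ne', mul_comm (m : ℝ), abs_div,
    abs_of_pos hm, ← div_div]
  gcongr

lemma ae_proj_mem_Icc (hlam : lam ∈ unitCube X m) (η : X → Measure ℝ) (x : X)
    [IsProbabilityMeasure (η x)] {a b : ℝ} (h : ∀ᵐ z ∂η x, z ∈ Icc a b) :
    ∀ᵐ z ∂proj lam η x, z ∈ Icc a b :=
  ae_paramDistOne_of_forall fun i => Icc_subset_Icc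
    (le_invCDF (qlevel_mem_Ioo i) (h.mono fun _ hz => hz.1))
    (upInvCDF_le (qlevel_mem_Ioo i) (h.mono fun _ hz => hz.2)) (projParam_mem_Icc hlam η x i)

end QuantileProjection

section Measurability

variable {α β δ : Type*} [MeasurableSpace α] [MeasurableSpace β] [MeasurableSpace δ] {t : ℝ}

lemma measurable_measure_preimage_prodMk {κ : α → Measure β} (hκ : Measurable κ)
    [∀ a, IsProbabilityMeasure (κ a)] {s : Set (α × β)} (hs : MeasurableSet s) :
    Measurable fun a => κ a (Prod.mk a ⁻¹' s) :=
  have : IsMarkovKernel (⟨κ, hκ⟩ : Kernel α β) :=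
    ⟨fun a => inferInstanceAs (IsProbabilityMeasure (κ a))⟩
  Kernel.measurable_kernel_prodMk_left (κ := ⟨κ, hκ⟩) hs

lemma measurable_map_prodMk {κ : α → Measure β} (hκ : Measurable κ)
    [∀ a, IsProbabilityMeasure (κ a)] {f : α × β → δ} (hf : Measurable f) :
    Measurable fun a => (κ a).map fun b => f (a, b) := by
  refine Measure.measurable_of_measurable_coe _ fun s hs => ?_
  have heq : ∀ a, (κ a).map (fun b => f (a, b)) s = κ a (Prod.mk a ⁻¹' (f ⁻¹' s)) := fun a =>
    Measure.map_apply (hf.comp measurable_prodMk_left) hs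
  simp only [heq]
  exact measurable_measure_preimage_prodMk hκ (hf hs)

variable {κ : α → Measure ℝ} [∀ a, IsProbabilityMeasure (κ a)]

lemma measurable_cdf_uncurry (hκ : Measurable κ) :
    Measurable fun q : α × ℝ => cdf (κ q.1) q.2 := by
  have heq : (fun q : α × ℝ => cdf (κ q.1) q.2) = fun q => (κ q.1 (Iic q.2)).toReal :=
    funext fun q => by rw [cdf_eq_real, measureReal_def]
  rw [heq]
  exact (measurable_measure_preimage_prodMk (κ := fun q : α × ℝ => κ q.1)
    (s := {r | r.2 ≤ r.1.2}) (hκ.comp measurable_fst)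
    (measurableSet_le (by fun_prop) (by fun_prop))).ennreal_toReal

lemma measurable_cdf_left (hκ : Measurable κ) (y : ℝ) : Measurable fun a => cdf (κ a) y :=
  (measurable_cdf_uncurry hκ).comp measurable_prodMk_right

lemma measurable_invCDF_left (hκ : Measurable κ) (ht : t ∈ Ioo (0 : ℝ) 1) :
    Measurable fun a => invCDF (κ a) t := by
  refine measurable_of_Iic fun y => ?_
  simp only [preimage, mem_Iic, invCDF_le_iff _ ht]
  exact measurableSet_le measurable_const (measurable_cdf_left hκ y)

lemma measurable_upInvCDF_left (hκ : Measurable κ) (ht : t ∈ Ioo (0 : ℝ) 1) :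
    Measurable fun a => upInvCDF (κ a) t := by
  refine measurable_of_Iio fun y => ?_
  have heq : (fun a => upInvCDF (κ a) t) ⁻¹' Iio y
      = ⋃ (q : ℚ) (_ : (q : ℝ) < y), {a | t < cdf (κ a) q} := by
    ext a
    simp only [mem_preimage, mem_Iio, upInvCDF_lt_iff _ ht, mem_iUnion, exists_prop]
    refine ⟨fun ⟨z, hzy, hz⟩ => ?_, fun ⟨q, hqy, hq⟩ => ⟨q, hqy, hq⟩⟩
    obtain ⟨q, hzq, hqy⟩ := exists_rat_btwn hzy
    exact ⟨q, hqy, hz.trans_le (monotone_cdf _ hzq.le)⟩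
  rw [heq]
  exact .iUnion fun q => .iUnion fun _ =>
    measurableSet_lt measurable_const (measurable_cdf_left hκ q)

lemma measurable_paramDistOne {m : ℕ} :
    Measurable (paramDistOne : (Fin m → ℝ) → Measure ℝ) := by
  refine Measure.measurable_of_measurable_coe _ fun s hs => ?_
  simp only [paramDistOne, Measure.smul_apply, Measure.finsetSum_apply, smul_eq_mul]
  exact (Finset.measurable_sum _ fun i _ => (Measure.measurable_coe hs).comp
    (Measure.measurable_dirac.comp (measurable_pi_apply i))).const_mul _

lemma measurable_proj {m : ℕ} {lam : α → Fin m → ℝ} (hlam : Measurable lam) (hκ : Measurable κ) :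
    Measurable (proj lam κ) := by
  refine measurable_paramDistOne.comp (measurable_pi_lambda _ fun i => ?_)
  have hlam_i : Measurable fun a => lam a i := (measurable_pi_apply i).comp hlam
  exact ((measurable_const.sub hlam_i).mul (measurable_invCDF_left hκ (qlevel_mem_Ioo i))).add
    (hlam_i.mul (measurable_upInvCDF_left hκ (qlevel_mem_Ioo i)))

end Measurability

section CDFDistance

/-- The `L¹` distance between distribution functions. It equals `w1` (`w1_eq_toReal_cdfDist`), and
in contrast to `w1` it is convex in the pair of measures by inspection. Being valued in `ℝ≥0∞`, it
needs no integrability assumption. -/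
noncomputable def cdfDist (ν ν' : Measure ℝ) : ℝ≥0∞ :=
  ∫⁻ y, ENNReal.ofReal |cdf ν y - cdf ν' y|

lemma measurable_cdf (ν : Measure ℝ) : Measurable (cdf ν) := (monotone_cdf ν).measurable

lemma measurable_ofReal_abs_cdf_sub_cdf (ν ν' : Measure ℝ) :
    Measurable fun y => ENNReal.ofReal |cdf ν y - cdf ν' y| :=
  ((measurable_cdf ν).sub (measurable_cdf ν')).norm.ennreal_ofReal

lemma cdfDist_self (ν : Measure ℝ) : cdfDist ν ν = 0 := by simp [cdfDist]

lemma cdfDist_triangle (ν₁ ν₂ ν₃ : Measure ℝ) :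
    cdfDist ν₁ ν₃ ≤ cdfDist ν₁ ν₂ + cdfDist ν₂ ν₃ := by
  rw [cdfDist, cdfDist, cdfDist, ← lintegral_add_left (measurable_ofReal_abs_cdf_sub_cdf ν₁ ν₂)]
  refine lintegral_mono fun y => ?_
  rw [← ENNReal.ofReal_add (abs_nonneg _) (abs_nonneg _)]
  exact ENNReal.ofReal_le_ofReal (abs_sub_le _ _ _)

lemma volume_Ici_symmDiff_Ici (a b : ℝ) :
    volume (symmDiff (Ici a) (Ici b)) = ENNReal.ofReal |a - b| := by
  have heq : symmDiff (Ici a) (Ici b) = Ico (min a b) (max a b) := by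
    ext y
    simp only [mem_symmDiff, mem_Ici, mem_Ico, min_le_iff, lt_max_iff, not_le]
    grind
  rw [heq, Real.volume_Ico, max_sub_min_eq_abs']

lemma Iic_symmDiff_Iic {α : Type*} [LinearOrder α] (a b : α) :
    symmDiff (Iic a) (Iic b) = uIoc a b := by
  ext y
  simp only [mem_symmDiff, mem_Iic, mem_uIoc, not_le]
  grind

/- Both sides measure the region between the two graphs: on the left it is sliced along `t`, on the
right along `y`. -/
lemma lintegral_abs_invCDF_sub_invCDF_eq_cdfDist (ν ν' : Measure ℝ) :
    ∫⁻ t in Ioo (0 : ℝ) 1, ENNReal.ofReal |invCDF ν t - invCDF ν' t| = cdfDist ν ν' := by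
  let H : Measure ℝ → Set (ℝ × ℝ) := fun μ => {p | p.1 ≤ cdf μ p.2}
  have hH : ∀ μ, MeasurableSet (H μ) := fun μ =>
    measurableSet_le measurable_fst ((measurable_cdf μ).comp measurable_snd)
  have hslice_t : ∀ μ, ∀ t ∈ Ioo (0 : ℝ) 1, Prod.mk t ⁻¹' H μ = Ici (invCDF μ t) :=
    fun μ t ht => ext fun y => (invCDF_le_iff μ ht).symm
  have hslice_y : ∀ μ y, (fun t => (t, y)) ⁻¹' H μ = Iic (cdf μ y) := fun _ _ => rfl
  calc ∫⁻ t in Ioo (0 : ℝ) 1, ENNReal.ofReal |invCDF ν t - invCDF ν' t|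
      = ∫⁻ t in Ioo (0 : ℝ) 1, volume (Prod.mk t ⁻¹' symmDiff (H ν) (H ν')) := by
        refine setLIntegral_congr_fun measurableSet_Ioo fun t ht => ?_
        simp only [preimage_symmDiff, hslice_t _ t ht, volume_Ici_symmDiff_Ici]
    _ = ∫⁻ y, volume.restrict (Ioo (0 : ℝ) 1) ((fun t => (t, y)) ⁻¹' symmDiff (H ν) (H ν')) := by
        have hm := (hH ν).symmDiff (hH ν')
        rw [← Measure.prod_apply hm, Measure.prod_apply_symm hm]
    _ = cdfDist ν ν' := by
        refine lintegral_congr fun y => ?_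
        have hsub : uIoc (cdf ν y) (cdf ν' y) ⊆ Ioc 0 1 :=
          Ioc_subset_Ioc (le_min (cdf_nonneg _ _) (cdf_nonneg _ _))
            (max_le (cdf_le_one _ _) (cdf_le_one _ _))
        rw [preimage_symmDiff, hslice_y, hslice_y, Iic_symmDiff_Iic,
          Measure.restrict_congr_set Ioo_ae_eq_Ioc, Measure.restrict_apply measurableSet_uIoc,
          inter_eq_left.2 hsub, Real.volume_uIoc, abs_sub_comm]

lemma w1_eq_toReal_cdfDist (ν ν' : Measure ℝ) : w1 ν ν' = (cdfDist ν ν').toReal := by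
  have hmeas : ∀ μ, AEMeasurable (invCDF μ) (volume.restrict (Ioo 0 1)) := fun μ =>
    aemeasurable_restrict_of_monotoneOn measurableSet_Ioo (monotoneOn_invCDF μ)
  have hdiff : AEStronglyMeasurable (fun t => |invCDF ν t - invCDF ν' t|)
      (volume.restrict (Ioo 0 1)) := ((hmeas ν).sub (hmeas ν')).norm.aestronglyMeasurable
  rw [← lintegral_abs_invCDF_sub_invCDF_eq_cdfDist, w1, integral_eq_lintegral_of_nonneg_ae
    (ae_of_all _ fun _ => abs_nonneg _) hdiff]

lemma cdfDist_le_of_abs_cdf_sub_cdf_le {ν ν' : Measure ℝ} [IsProbabilityMeasure ν]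
    [IsProbabilityMeasure ν'] {a b c : ℝ} (hν : ∀ᵐ z ∂ν, z ∈ Icc a b)
    (hν' : ∀ᵐ z ∂ν', z ∈ Icc a b) (h : ∀ y, |cdf ν y - cdf ν' y| ≤ c) :
    cdfDist ν ν' ≤ ENNReal.ofReal (c * (b - a)) := by
  have hc : 0 ≤ c := (abs_nonneg _).trans (h 0)
  calc cdfDist ν ν' ≤ ∫⁻ y, (Ico a b).indicator (fun _ => ENNReal.ofReal c) y := by
        refine lintegral_mono fun y => ?_
        by_cases hy : y ∈ Ico a b
        · rw [indicator_of_mem hy]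
          exact ENNReal.ofReal_le_ofReal (h y)
        rw [indicator_of_notMem hy]
        rcases lt_or_ge y a with hya | hay
        · have hlt : ∀ z ∈ Icc a b, y < z := fun z hz => hya.trans_le hz.1
          simp [cdf_eq_zero_of_ae_lt (hν.mono hlt), cdf_eq_zero_of_ae_lt (hν'.mono hlt)]
        · have hle : ∀ z ∈ Icc a b, z ≤ y := fun z hz =>
            hz.2.trans (not_lt.1 fun hyb => hy ⟨hay, hyb⟩)
          simp [cdf_eq_one_of_ae_le (hν.mono hle), cdf_eq_one_of_ae_le (hν'.mono hle)]
    _ = ENNReal.ofReal (c * (b - a)) := by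
        rw [lintegral_indicator_const measurableSet_Ico, Real.volume_Ico, ENNReal.ofReal_mul hc]

lemma cdfDist_proj_le {X : Type*} {m : ℕ} [NeZero m] {lam : X → Fin m → ℝ}
    (hlam : lam ∈ unitCube X m) (η : X → Measure ℝ) (x : X) [IsProbabilityMeasure (η x)]
    {a b : ℝ} (h : ∀ᵐ z ∂η x, z ∈ Icc a b) :
    cdfDist (proj lam η x) (η x) ≤ ENNReal.ofReal ((b - a) / (2 * m)) := by
  have : IsProbabilityMeasure (proj lam η x) := isProbabilityMeasure_paramDistOne _
  convert! cdfDist_le_of_abs_cdf_sub_cdf_le (ae_proj_mem_Icc hlam η x h) h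
    (abs_cdf_proj_sub_cdf_le hlam η x) using 2
  ring

end CDFDistance

section CDFDistanceOfMixtures

variable {α : Type*} [MeasurableSpace α] {μ : Measure α} [IsProbabilityMeasure μ]
  {κ κ' : α → Measure ℝ} [∀ a, IsProbabilityMeasure (κ a)] [∀ a, IsProbabilityMeasure (κ' a)]

lemma cdf_bind (hκ : Measurable κ) (y : ℝ) : cdf (μ.bind κ) y = ∫ a, cdf (κ a) y ∂μ := by
  have := isProbabilityMeasure_bind (m := μ) hκ.aemeasurable (ae_of_all _ inferInstance)
  rw [cdf_eq_real, measureReal_def, Measure.bind_apply measurableSet_Iic hκ.aemeasurable,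
    integral_eq_lintegral_of_nonneg_ae (ae_of_all _ fun _ => cdf_nonneg _ _)
      (measurable_cdf_left hκ y).aestronglyMeasurable]
  simp only [ofReal_cdf]

lemma integrable_cdf (hκ : Measurable κ) (y : ℝ) : Integrable (fun a => cdf (κ a) y) μ :=
  .of_bound (measurable_cdf_left hκ y).aestronglyMeasurable 1 <| ae_of_all _ fun _ => by
    rw [Real.norm_of_nonneg (cdf_nonneg _ _)]
    exact cdf_le_one _ _

lemma cdfDist_bind_le (hκ : Measurable κ) (hκ' : Measurable κ') :
    cdfDist (μ.bind κ) (μ.bind κ') ≤ ∫⁻ a, cdfDist (κ a) (κ' a) ∂μ := by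
  calc cdfDist (μ.bind κ) (μ.bind κ')
      ≤ ∫⁻ y, ∫⁻ a, ENNReal.ofReal |cdf (κ a) y - cdf (κ' a) y| ∂μ := by
        refine lintegral_mono fun y => ?_
        rw [cdf_bind hκ, cdf_bind hκ', ← integral_sub (integrable_cdf hκ y) (integrable_cdf hκ' y)]
        simp only [← Real.norm_eq_abs, ofReal_norm]
        exact enorm_integral_le_lintegral_enorm _
    _ = ∫⁻ a, cdfDist (κ a) (κ' a) ∂μ :=
        lintegral_lintegral_swap (((measurable_cdf_uncurry hκ).sub
          (measurable_cdf_uncurry hκ')).norm.ennreal_ofReal.comp measurable_swap).aemeasurable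

end CDFDistanceOfMixtures

section CDFDistanceOfAffineImages

variable {γ : ℝ} (ν ν' : Measure ℝ) [IsProbabilityMeasure ν] [IsProbabilityMeasure ν']

lemma isProbabilityMeasure_map_add_const_mul (r γ : ℝ) :
    IsProbabilityMeasure (ν.map fun z => r + γ * z) :=
  Measure.isProbabilityMeasure_map (by fun_prop)

lemma cdf_map_add_const_mul (hγ : 0 < γ) (r y : ℝ) :
    cdf (ν.map fun z => r + γ * z) y = cdf ν ((y - r) / γ) := by
  have := isProbabilityMeasure_map_add_const_mul ν r γ
  have heq : (fun z => r + γ * z) ⁻¹' Iic y = Iic ((y - r) / γ) := by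
    ext z
    rw [mem_preimage, mem_Iic, mem_Iic, le_div_iff₀ hγ, le_sub_iff_add_le', mul_comm]
  rw [cdf_eq_real, cdf_eq_real, map_measureReal_apply (by fun_prop) measurableSet_Iic, heq]

lemma lintegral_comp_sub_div (hγ : 0 < γ) (r : ℝ) {f : ℝ → ℝ≥0∞} (hf : Measurable f) :
    ∫⁻ y, f ((y - r) / γ) = ENNReal.ofReal γ * ∫⁻ y, f y := by
  have hmap := Real.map_volume_mul_right (inv_ne_zero hγ.ne')
  rw [inv_inv, abs_of_pos hγ] at hmap
  rw [lintegral_sub_right_eq_self (fun y => f (y / γ)) r, ← smul_eq_mul,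
    ← lintegral_smul_measure, ← hmap, lintegral_map hf (by fun_prop)]
  simp only [div_eq_mul_inv]

lemma cdfDist_map_add_const_mul (hγ : 0 ≤ γ) (r : ℝ) :
    cdfDist (ν.map fun z => r + γ * z) (ν'.map fun z => r + γ * z)
      = ENNReal.ofReal γ * cdfDist ν ν' := by
  rcases hγ.eq_or_lt with rfl | hγ
  · simp [cdfDist_self]
  · simp only [cdfDist, cdf_map_add_const_mul _ hγ]
    exact lintegral_comp_sub_div hγ r (measurable_ofReal_abs_cdf_sub_cdf ν ν')

end CDFDistanceOfAffineImages

section Bellman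

variable {X : Type*} [MeasurableSpace X] {P : X → Measure (ℝ × X)} {γ : ℝ}
  {η η' : X → Measure ℝ} [∀ x, IsProbabilityMeasure (η x)] [∀ x, IsProbabilityMeasure (η' x)]

lemma measurable_map_add_const_mul (hη : Measurable η) (γ : ℝ) :
    Measurable fun p : ℝ × X => (η p.2).map fun z => p.1 + γ * z :=
  measurable_map_prodMk (κ := fun p : ℝ × X => η p.2) (f := fun q => q.1.1 + γ * q.2)
    (hη.comp measurable_snd) (by fun_prop)

lemma measurable_bellman (hP : Measurable P) (hη : Measurable η) :
    Measurable (bellman P γ η) :=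
  (Measure.measurable_bind' (measurable_map_add_const_mul hη γ)).comp hP

variable [∀ x, IsProbabilityMeasure (P x)]

lemma isProbabilityMeasure_bellman (hη : Measurable η) (x : X) :
    IsProbabilityMeasure (bellman P γ η x) :=
  isProbabilityMeasure_bind (measurable_map_add_const_mul hη γ).aemeasurable
    (ae_of_all _ fun p => isProbabilityMeasure_map_add_const_mul (η p.2) p.1 γ)

lemma bellman_apply_le (hη : Measurable η) {x : X} {s : Set ℝ} (hs : MeasurableSet s) {ε : ℝ≥0∞}
    (h : ∀ᵐ p ∂P x, η p.2 {z | p.1 + γ * z ∈ s} ≤ ε) : bellman P γ η x s ≤ ε := by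
  rw [bellman, Measure.bind_apply hs (measurable_map_add_const_mul hη γ).aemeasurable]
  calc ∫⁻ p, (η p.2).map (fun z => p.1 + γ * z) s ∂P x
      ≤ ∫⁻ _, ε ∂P x := lintegral_mono_ae <| h.mono fun p hp => by
        rwa [Measure.map_apply (by fun_prop) hs]
    _ = ε := by simp

lemma ae_bellman_mem_Icc (hη : Measurable η) (hγ : 0 ≤ γ) {a b : ℝ} {x : X}
    (hR : ∀ᵐ p ∂P x, p.1 ∈ Icc ((1 - γ) * a) ((1 - γ) * b))
    (h : ∀ y, ∀ᵐ z ∂η y, z ∈ Icc a b) : ∀ᵐ z ∂bellman P γ η x, z ∈ Icc a b := by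
  refine nonpos_iff_eq_zero.1 (bellman_apply_le hη measurableSet_Icc.compl ?_)
  filter_upwards [hR] with p hp
  have hsub : {z | p.1 + γ * z ∈ (Icc a b)ᶜ} ⊆ {z | z ∈ Icc a b}ᶜ := fun z hz hzab => hz
    ⟨by linarith [hp.1, mul_le_mul_of_nonneg_left hzab.1 hγ],
      by linarith [hp.2, mul_le_mul_of_nonneg_left hzab.2 hγ]⟩
  exact (measure_mono_null hsub (h p.2)).le

lemma cdfDist_bellman_le (hη : Measurable η) (hη' : Measurable η') (hγ : 0 ≤ γ) {D : ℝ≥0∞}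
    (h : ∀ y, cdfDist (η y) (η' y) ≤ D) (x : X) :
    cdfDist (bellman P γ η x) (bellman P γ η' x) ≤ ENNReal.ofReal γ * D := by
  have (p : ℝ × X) := isProbabilityMeasure_map_add_const_mul (η p.2) p.1 γ
  have (p : ℝ × X) := isProbabilityMeasure_map_add_const_mul (η' p.2) p.1 γ
  calc cdfDist (bellman P γ η x) (bellman P γ η' x)
      ≤ ∫⁻ p, cdfDist ((η p.2).map fun z => p.1 + γ * z)
          ((η' p.2).map fun z => p.1 + γ * z) ∂P x :=
        cdfDist_bind_le (measurable_map_add_const_mul hη γ) (measurable_map_add_const_mul hη' γ)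
    _ = ∫⁻ p, ENNReal.ofReal γ * cdfDist (η p.2) (η' p.2) ∂P x := by
        simp only [cdfDist_map_add_const_mul _ _ hγ]
    _ ≤ ∫⁻ _, ENNReal.ofReal γ * D ∂P x :=
        lintegral_mono fun p => mul_le_mul_right (h p.2) _
    _ = ENNReal.ofReal γ * D := by simp

end Bellman

section SupportOfFixedPoint

open Filter Topology

lemma isTightMeasureSet_of_finite {α : Type*} [MeasurableSpace α] [TopologicalSpace α]
    [TopologicalSpace.IsCompletelyPseudoMetrizableSpace α] [SecondCountableTopology α]
    [BorelSpace α] {S : Set (Measure α)} (hS : S.Finite) (h : ∀ μ ∈ S, IsFiniteMeasure μ) :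
    IsTightMeasureSet S := by
  induction S, hS using Set.Finite.induction_on with
  | empty =>
    exact isTightMeasureSet_iff_exists_isCompact_measure_compl_le.2 fun _ _ =>
      ⟨∅, isCompact_empty, by simp⟩
  | @insert μ S _ _ ih =>
    have := h μ (mem_insert μ S)
    exact isTightMeasureSet_singleton.union (ih fun ν hν => h ν (mem_insert_of_mem μ hν))

lemma tendsto_iSup_measure_lt_pow_mul {ι E : Type*} [TopologicalSpace E] [MeasurableSpace E]
    {η : ι → Measure E} (hη : IsTightMeasureSet (range η)) {f : E → ℝ} (hf : Continuous f)
    {γ M : ℝ} (hγ : 0 ≤ γ) (hγ1 : γ < 1) (hM : 0 < M) :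
    Tendsto (fun n : ℕ => ⨆ y, η y {z | M < γ ^ n * f z}) atTop (𝓝 0) := by
  refine ENNReal.tendsto_nhds_zero.2 fun ε hε => ?_
  obtain ⟨K, hK, hKε⟩ := isTightMeasureSet_iff_exists_isCompact_measure_compl_le.1 hη ε hε
  obtain ⟨C, hC⟩ := hK.bddAbove_image hf.continuousOn
  have hlim : Tendsto (fun n : ℕ => γ ^ n * C) atTop (𝓝 0) := by
    simpa using (tendsto_pow_atTop_nhds_zero_of_lt_one hγ hγ1).mul_const C
  filter_upwards [hlim.eventually (gt_mem_nhds hM)] with n hn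
  have hsub : {z | M < γ ^ n * f z} ⊆ Kᶜ := fun z hz hzK => hz.not_ge <|
    (mul_le_mul_of_nonneg_left (hC (mem_image_of_mem f hzK)) (pow_nonneg hγ n)).trans hn.le
  exact iSup_le fun y => (measure_mono hsub).trans (hKε _ (mem_range_self y))

variable {X : Type*} [MeasurableSpace X] {P : X → Measure (ℝ × X)} [∀ x, IsProbabilityMeasure (P x)]
  {γ : ℝ} {η : X → Measure ℝ} [∀ x, IsProbabilityMeasure (η x)] {f : ℝ → ℝ} {M : ℝ}

lemma measure_lt_le_iSup_measure_lt_pow_mul (hη : Measurable η) (hfix : bellman P γ η = η)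
    (hf : Continuous f) (hγ : 0 ≤ γ) (hstep : ∀ x, ∀ᵐ p ∂P x, ∀ z, f (p.1 + γ * z) ≤ γ * f z)
    (n : ℕ) (x : X) : η x {z | M < f z} ≤ ⨆ y, η y {z | M < γ ^ n * f z} := by
  induction n generalizing x with
  | zero => simpa using le_iSup (fun y => η y {z | M < f z}) x
  | succ n ih =>
    refine (ih x).trans (iSup_le fun y => ?_)
    conv_lhs => rw [← hfix]
    refine bellman_apply_le hη (measurableSet_lt measurable_const (by fun_prop)) ?_
    filter_upwards [hstep y] with p hp
    refine (measure_mono fun z (hz : M < γ ^ n * f (p.1 + γ * z)) => ?_).trans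
      (le_iSup (fun y => η y {z | M < γ ^ (n + 1) * f z}) p.2)
    calc M < γ ^ n * f (p.1 + γ * z) := hz
      _ ≤ γ ^ n * (γ * f z) := mul_le_mul_of_nonneg_left (hp z) (pow_nonneg hγ n)
      _ = γ ^ (n + 1) * f z := by ring

lemma ae_nonpos_of_bellman_eq_self (hη : Measurable η) (hηt : IsTightMeasureSet (range η))
    (hfix : bellman P γ η = η) (hf : Continuous f) (hγ : 0 ≤ γ) (hγ1 : γ < 1)
    (hstep : ∀ x, ∀ᵐ p ∂P x, ∀ z, f (p.1 + γ * z) ≤ γ * f z) (x : X) :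
    ∀ᵐ z ∂η x, f z ≤ 0 := by
  have hnull : ∀ M > 0, η x {z | M < f z} = 0 := fun M hM => nonpos_iff_eq_zero.1 <|
    ge_of_tendsto' (tendsto_iSup_measure_lt_pow_mul hηt hf hγ hγ1 hM) fun n =>
      measure_lt_le_iSup_measure_lt_pow_mul hη hfix hf hγ hstep n x
  have hall : ∀ᵐ z ∂η x, ∀ n : ℕ, f z ≤ 1 / (n + 1) := ae_all_iff.2 fun n => by
    simpa [ae_iff] using hnull (1 / (n + 1)) Nat.one_div_pos_of_nat
  exact hall.mono fun z hz => ge_of_tendsto' tendsto_one_div_add_atTop_nhds_zero_nat hz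

lemma ae_mem_Icc_of_bellman_eq_self (hη : Measurable η) (hηt : IsTightMeasureSet (range η))
    (hfix : bellman P γ η = η) (hγ : 0 ≤ γ) (hγ1 : γ < 1) {a b : ℝ}
    (hR : ∀ x, ∀ᵐ p ∂P x, p.1 ∈ Icc ((1 - γ) * a) ((1 - γ) * b)) (x : X) :
    ∀ᵐ z ∂η x, z ∈ Icc a b := by
  have hlower : ∀ᵐ z ∂η x, a - z ≤ 0 :=
    ae_nonpos_of_bellman_eq_self (f := fun z => a - z) hη hηt hfix (by fun_prop) hγ hγ1
      (fun x => (hR x).mono fun p hp z => by linarith [hp.1]) x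
  have hupper : ∀ᵐ z ∂η x, z - b ≤ 0 :=
    ae_nonpos_of_bellman_eq_self (f := fun z => z - b) hη hηt hfix (by fun_prop) hγ hγ1
      (fun x => (hR x).mono fun p hp z => by linarith [hp.2]) x
  filter_upwards [hlower, hupper] with z ha hb using ⟨sub_nonpos.1 ha, sub_nonpos.1 hb⟩

end SupportOfFixedPoint

section ProjectedBellmanIterates

/-- Return-distribution functions on which the projected Bellman operator acts: Markov kernels from
states to `ℝ` whose values are supported on `[a, b]`. -/
structure IsBoundedReturnDist {X : Type*} [MeasurableSpace X] (a b : ℝ) (η : X → Measure ℝ) :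
    Prop where
  measurable : Measurable η
  isProbabilityMeasure : ∀ x, IsProbabilityMeasure (η x)
  ae_mem_Icc : ∀ x, ∀ᵐ z ∂η x, z ∈ Icc a b

variable {X : Type*} [MeasurableSpace X] {P : X → Measure (ℝ × X)} [∀ x, IsProbabilityMeasure (P x)]
  {γ a b : ℝ} {η : X → Measure ℝ} {m : ℕ} [NeZero m] {lam : X → Fin m → ℝ}

lemma isBoundedReturnDist_bellman (hη : IsBoundedReturnDist a b η) (hP : Measurable P)
    (hγ : 0 ≤ γ) (hR : ∀ x, ∀ᵐ p ∂P x, p.1 ∈ Icc ((1 - γ) * a) ((1 - γ) * b)) :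
    IsBoundedReturnDist a b (bellman P γ η) :=
  have := hη.isProbabilityMeasure
  ⟨measurable_bellman hP hη.measurable, isProbabilityMeasure_bellman hη.measurable,
    fun x => ae_bellman_mem_Icc hη.measurable hγ (hR x) hη.ae_mem_Icc⟩

lemma isBoundedReturnDist_proj (hη : IsBoundedReturnDist a b η) (hlamm : Measurable lam)
    (hlam : lam ∈ unitCube X m) : IsBoundedReturnDist a b (proj lam η) :=
  have := hη.isProbabilityMeasure
  ⟨measurable_proj hlamm hη.measurable, fun _ => isProbabilityMeasure_paramDistOne _,
    fun x => ae_proj_mem_Icc hlam η x (hη.ae_mem_Icc x)⟩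

lemma isBoundedReturnDist_iterate_proj_bellman (hη : IsBoundedReturnDist a b η)
    (hP : Measurable P) (hγ : 0 ≤ γ)
    (hR : ∀ x, ∀ᵐ p ∂P x, p.1 ∈ Icc ((1 - γ) * a) ((1 - γ) * b)) (hlamm : Measurable lam)
    (hlam : lam ∈ unitCube X m) (k : ℕ) :
    IsBoundedReturnDist a b ((fun η => proj lam (bellman P γ η))^[k] η) :=
  Function.Iterate.rec (IsBoundedReturnDist a b) hη (fun _ h =>
    isBoundedReturnDist_proj (isBoundedReturnDist_bellman h hP hγ hR) hlamm hlam) k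

lemma cdfDist_iterate_proj_bellman_le (hη : IsBoundedReturnDist a b η) (hP : Measurable P)
    (hγ : 0 ≤ γ) (hR : ∀ x, ∀ᵐ p ∂P x, p.1 ∈ Icc ((1 - γ) * a) ((1 - γ) * b))
    (hfix : bellman P γ η = η) (hlamm : Measurable lam) (hlam : lam ∈ unitCube X m)
    (k : ℕ) (x : X) :
    cdfDist ((fun η => proj lam (bellman P γ η))^[k] η x) (η x)
      ≤ ENNReal.ofReal ((b - a) / (2 * m)) * ∑ i ∈ Finset.range k, ENNReal.ofReal γ ^ i := by
  induction k generalizing x with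
  | zero => simp [cdfDist_self]
  | succ k ih =>
    have hk := isBoundedReturnDist_iterate_proj_bellman hη hP hγ hR hlamm hlam k
    set ηk := (fun η => proj lam (bellman P γ η))^[k] η with hηk
    have := hη.isProbabilityMeasure
    have := hk.isProbabilityMeasure
    have hTk := isBoundedReturnDist_bellman hk hP hγ hR
    have := hTk.isProbabilityMeasure
    have hproj := cdfDist_proj_le hlam (bellman P γ ηk) x (hTk.ae_mem_Icc x)
    have hcontr := cdfDist_bellman_le (P := P) hk.measurable hη.measurable hγ ih x
    rw [hfix] at hcontr
    rw [Function.iterate_succ_apply', ← hηk, geom_sum_succ, mul_add, mul_one, mul_left_comm,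
      add_comm]
    exact (cdfDist_triangle _ (bellman P γ ηk x) _).trans (add_le_add hproj hcontr)

end ProjectedBellmanIterates

theorem qdp_instance_dependent_bound_general {X : Type*} [MeasurableSpace X]
    {P : X → Measure (ℝ × X)} [∀ x, IsProbabilityMeasure (P x)] (hP : Measurable P)
    {γ : ℝ} (hγ0 : 0 ≤ γ) (hγ1 : γ < 1) {Rmin Rmax : ℝ}
    (hsupp : ∀ x, ∀ᵐ p ∂P x, p.1 ∈ Icc Rmin Rmax)
    {ηπ : X → Measure ℝ} [∀ x, IsProbabilityMeasure (ηπ x)] (hηπ : Measurable ηπ)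
    (htight : IsTightMeasureSet (range ηπ)) (hfix : bellman P γ ηπ = ηπ)
    {m : ℕ} [NeZero m] {lam : X → Fin m → ℝ} (hlamm : Measurable lam)
    (hlam : lam ∈ unitCube X m) (k : ℕ) (x : X) :
    w1 (((fun η => proj lam (bellman P γ η))^[k] ηπ) x) (ηπ x)
      ≤ (Rmax / (1 - γ) - Rmin / (1 - γ)) * (1 - γ ^ k) / (2 * m * (1 - γ)) := by
  set a := Rmin / (1 - γ) with ha
  set b := Rmax / (1 - γ) with hb
  have hreward : ∀ x, ∀ᵐ p ∂P x, p.1 ∈ Icc ((1 - γ) * a) ((1 - γ) * b) := by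
    simpa only [ha, hb, mul_div_cancel₀ _ (sub_pos.2 hγ1).ne'] using hsupp
  have hbdd : IsBoundedReturnDist a b ηπ := ⟨hηπ, inferInstance,
    ae_mem_Icc_of_bellman_eq_self hηπ htight hfix hγ0 hγ1 hreward⟩
  obtain ⟨z, hz⟩ := (hbdd.ae_mem_Icc x).exists
  have hab : 0 ≤ b - a := sub_nonneg.2 (hz.1.trans hz.2)
  have hgeom : ∑ i ∈ Finset.range k, γ ^ i = (1 - γ ^ k) / (1 - γ) := by
    rw [geom_sum_eq hγ1.ne, ← neg_div_neg_eq, neg_sub, neg_sub]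
  have hdist := cdfDist_iterate_proj_bellman_le hbdd hP hγ0 hreward hfix hlamm hlam k x
  simp only [← ENNReal.ofReal_pow hγ0] at hdist
  rw [← ENNReal.ofReal_sum_of_nonneg fun _ _ => pow_nonneg hγ0 _,
    ← ENNReal.ofReal_mul (by positivity), hgeom, div_mul_div_comm] at hdist
  rw [w1_eq_toReal_cdfDist]
  refine ENNReal.toReal_le_of_le_ofReal ?_ hdist
  rw [← div_mul_div_comm, ← hgeom]
  positivity

/-- Instance-dependent approximation bound: for any `k ≥ 1`,
`w̄_1((Π^λ T^π)^k η^π, η^π) ≤ (V_max − V_min)(1 − γ^k)/(2m(1−γ))` (stated coordinatewise over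
states); in particular, if `η̂^π_λ = (Π^λ T^π)^k η^π`, then the QDP fixed point satisfies this
bound. -/
theorem qdp_instance_dependent_bound
    {X : Type*} [Fintype X] [MeasurableSpace X] [MeasurableSingletonClass X]
    (P : X → Measure (ℝ × X)) (hP : ∀ x, IsProbabilityMeasure (P x))
    (γ : ℝ) (hγ0 : 0 ≤ γ) (hγ1 : γ < 1)
    (Rmin Rmax : ℝ) (hR : Rmin ≤ Rmax)
    (hsupp : ∀ x, P x {p : ℝ × X | p.1 ∈ Set.Icc Rmin Rmax}ᶜ = 0)
    (ηπ : X → Measure ℝ) (hηπ : ∀ x, IsProbabilityMeasure (ηπ x))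
    (hfix : bellman P γ ηπ = ηπ)
    (huniq : ∀ η : X → Measure ℝ, (∀ x, IsProbabilityMeasure (η x)) →
      bellman P γ η = η → η = ηπ)
    {m : ℕ} (hm : 0 < m) (lam : X → Fin m → ℝ) (hlam : lam ∈ unitCube X m) :
    (∀ k : ℕ, 1 ≤ k → ∀ x,
      w1 (((fun η => proj lam (bellman P γ η))^[k] ηπ) x) (ηπ x)
        ≤ (Rmax / (1 - γ) - Rmin / (1 - γ)) * (1 - γ ^ k) / (2 * m * (1 - γ)))
    ∧ (∀ (ηhat : X → Measure ℝ) (k : ℕ), 1 ≤ k →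
        ηhat = (fun η => proj lam (bellman P γ η))^[k] ηπ →
        ∀ x, w1 (ηhat x) (ηπ x)
          ≤ (Rmax / (1 - γ) - Rmin / (1 - γ)) * (1 - γ ^ k) / (2 * m * (1 - γ))) := by
  have : NeZero m := ⟨hm.ne'⟩
  have htight : IsTightMeasureSet (range ηπ) :=
    isTightMeasureSet_of_finite (finite_range ηπ) (forall_mem_range.2 inferInstance)
  have hbound := qdp_instance_dependent_bound_general (measurable_of_countable P) hγ0 hγ1 hsupp
    (measurable_of_countable ηπ) htight hfix (measurable_of_countable lam) hlam
  exact ⟨fun k _ => hbound k, fun ηhat k _ hk => hk ▸ hbound k⟩
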